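/- Let c : I → ℝ^6 be a solution of the Kepler–Heisenberg Hamilton equations on a maximal open interval I, with H(c(t)) = 0 for all t ∈ I and (x(t), y(t)) ≠ (0, 0) for all t ∈ I, and suppose z has consecutive zeros t₀ < t₁ < t₂. Let J = x·p_x + y·p_y + 2z·p_z (constant along c) and λ = exp(s(t₂) − s(t₀)). Then the orbit stratifies according to the sign of J: J < 0 if and only if λ < 1, in which case I is bounded above (future collision) and unbounded below; J > 0 if and only if λ > 1, in which case I is bounded below (past collision) and unbounded above; and J = 0 if and only if λ = 1, in which case I = ℝ. -/

import Mathlib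

/-!
The system is invariant under rotations about the `z`-axis and under the Carnot dilations
(combined with a rescaling of time), so at zero energy both `J` and `p_θ` are conserved, and the
motion reduces to a loop in the variables `v = 4z / (x² + y²) = tan u` and a transverse velocity
`Y = transv`, which satisfy `Y² + (J + p_θ v)² / √(1 + v²) = 1 / (4π)` (`transv_energy`). When
`z = 0` this reads `Y² = 1 / (4π) - J²`, and `z' = Y / 2`; as `z'` cannot have the same strict
sign at consecutive zeros of `z`, the values of `Y` at `t₀` and `t₂` agree. Hence the states at
`t₀` and `t₂` differ by a rotation and the dilation by `λ`.

The sign of `s(t₂) - s(t₀)` is found as follows (`drift`). Take `p = p_θ > 0`, `J ≥ 0`, and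
`j = J / p`, the other cases being equivalent by reflections or immediate. Along the loop
`dY/ds = -2 p N(v)` with `N(v) = (2 + v² - j v) / (2 √√(1 + v²))`, while `s` increases exactly
when `v > -j`. At a given height `Y` the loop has one branch in `v > -j` and one in `v < -j`, and
a function `Θ` of `Y` alone (`sepSlope`) satisfies `N ≤ Θ` on the first and `Θ ≤ N` on the second.
Therefore `s + Ψ(Y) / (2p)` with `Ψ' = 1 / Θ` is nondecreasing; since `Y` returns to its value, so
is `s` from `t₀` to `t₂`, strictly if `J > 0`. This gives the three equivalences between the sign
of `J` and the position of `λ` relative to `1`.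

By uniqueness for the differential equation a maximal solution contains every solution that meets
it (`maximal_absorbs`). Applied to the image of the solution under the symmetry carrying the state
at `t₀` to the state at `t₂`, and under its inverse, this shows that `I` is invariant under
`A : r ↦ t₂ + λ² (r - t₀)` and under `A⁻¹`. If `λ = 1`, `A` is a translation and `I = ℝ`. If
`λ ≠ 1`, the fixed point of `A` is not in `I`, because `x² + y²` is multiplied by `λ²` along `A`;
it lies beyond `t₂` for `λ < 1` and before `t₀` for `λ > 1`, and iterating the expanding one among
`A` and `A⁻¹` shows that `I` is unbounded on the other side.
-/

open Real Set

/-- The Kepler-Heisenberg Hamiltonian on phase space `ℝ^6` with coordinates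
`(x, y, z, pₓ, p_y, p_z)`. -/
noncomputable def KH (x y z px py pz : ℝ) : ℝ :=
  (1/2) * ((px - (1/2) * y * pz)^2 + (py + (1/2) * x * pz)^2)
    - 1 / (8 * π * Real.sqrt ((x^2 + y^2)^2 + 16 * z^2))

/-- The adapted coordinate `s = (1/4)·log((x² + y²)² + 16z²)`. -/
noncomputable def sCoord (x y z : ℝ) : ℝ :=
  (1/4) * Real.log ((x^2 + y^2)^2 + 16 * z^2)

/-- The adapted coordinate `u = arctan(4z/(x² + y²))`. -/
noncomputable def uCoord (x y z : ℝ) : ℝ :=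
  Real.arctan (4 * z / (x^2 + y^2))

/-- The dilational momentum `J = p_s = x·pₓ + y·p_y + 2z·p_z`. -/
def Jmom (x y z px py pz : ℝ) : ℝ := x * px + y * py + 2 * z * pz

/-- The angular momentum `p_θ = x·p_y − y·pₓ`. -/
def pTheta (x y px py : ℝ) : ℝ := x * py - y * px

/-- The adapted momentum coordinate `p_u`. -/
noncomputable def pU (x y z px py pz : ℝ) : ℝ :=
  (1/4) * pz * (x^2 + y^2) - 2 * z * (x * px + y * py) / (x^2 + y^2)

/-- Rotation by angle `φ` about the `z`-axis, lifted to phase space. -/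
noncomputable def rot (φ : ℝ) (q : ℝ × ℝ × ℝ × ℝ × ℝ × ℝ) : ℝ × ℝ × ℝ × ℝ × ℝ × ℝ :=
  (q.1 * Real.cos φ - q.2.1 * Real.sin φ,
   q.1 * Real.sin φ + q.2.1 * Real.cos φ,
   q.2.2.1,
   q.2.2.2.1 * Real.cos φ - q.2.2.2.2.1 * Real.sin φ,
   q.2.2.2.1 * Real.sin φ + q.2.2.2.2.1 * Real.cos φ,
   q.2.2.2.2.2)

/-- The Carnot dilation by `λ > 0`, lifted to phase space:
`δ_λ(x, y, z, pₓ, p_y, p_z) = (λx, λy, λ²z, λ⁻¹pₓ, λ⁻¹p_y, λ⁻²p_z)`. -/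
noncomputable def dil (l : ℝ) (q : ℝ × ℝ × ℝ × ℝ × ℝ × ℝ) : ℝ × ℝ × ℝ × ℝ × ℝ × ℝ :=
  (l * q.1, l * q.2.1, l^2 * q.2.2.1,
   l⁻¹ * q.2.2.2.1, l⁻¹ * q.2.2.2.2.1, (l^2)⁻¹ * q.2.2.2.2.2)

/-- The Hamiltonian as a function on the product phase space. -/
noncomputable def KH6 (q : ℝ × ℝ × ℝ × ℝ × ℝ × ℝ) : ℝ :=
  KH q.1 q.2.1 q.2.2.1 q.2.2.2.1 q.2.2.2.2.1 q.2.2.2.2.2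

/-- `c = (x, y, z, pₓ, p_y, p_z)` is a solution of Hamilton's equations for `KH` on the
open interval `I`: each coordinate function is differentiable with derivative given by the
corresponding (signed) partial derivative of `KH`, and the position avoids the origin. -/
def IsSolutionOn (I : Set ℝ) (x y z px py pz : ℝ → ℝ) : Prop :=
  IsOpen I ∧ I.OrdConnected ∧ I.Nonempty ∧
  (∀ t ∈ I, (x t, y t, z t) ≠ (0, 0, 0)) ∧
  (∀ t ∈ I,
    HasDerivAt x (deriv (fun a => KH (x t) (y t) (z t) a (py t) (pz t)) (px t)) t ∧
    HasDerivAt y (deriv (fun a => KH (x t) (y t) (z t) (px t) a (pz t)) (py t)) t ∧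
    HasDerivAt z (deriv (fun a => KH (x t) (y t) (z t) (px t) (py t) a) (pz t)) t ∧
    HasDerivAt px (-(deriv (fun a => KH a (y t) (z t) (px t) (py t) (pz t)) (x t))) t ∧
    HasDerivAt py (-(deriv (fun a => KH (x t) a (z t) (px t) (py t) (pz t)) (y t))) t ∧
    HasDerivAt pz (-(deriv (fun a => KH (x t) (y t) a (px t) (py t) (pz t)) (z t))) t)

/-- A solution on a maximal open interval: it cannot be extended to a solution on any
strictly larger open interval. -/
def IsMaximalSolution (I : Set ℝ) (x y z px py pz : ℝ → ℝ) : Prop :=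
  IsSolutionOn I x y z px py pz ∧
  ∀ (I' : Set ℝ) (x' y' z' px' py' pz' : ℝ → ℝ),
    IsSolutionOn I' x' y' z' px' py' pz' → I ⊆ I' →
    (∀ t ∈ I, x' t = x t ∧ y' t = y t ∧ z' t = z t ∧
      px' t = px t ∧ py' t = py t ∧ pz' t = pz t) →
    I' = I


/-! ### The equations of motion -/

/-- The square of the Korányi-type gauge, `ρ = √((x² + y²)² + 16z²) = exp (2s)`. -/
noncomputable def rho (x y z : ℝ) : ℝ := Real.sqrt ((x^2 + y^2)^2 + 16 * z^2)

lemma rho_rad_pos {x y z : ℝ} (h : (x, y, z) ≠ (0, 0, 0)) :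
    0 < (x^2 + y^2)^2 + 16 * z^2 := by
  by_contra hn
  apply h
  have hz : z = 0 := by nlinarith [sq_nonneg (x^2+y^2), sq_nonneg z]
  have hr : x^2 + y^2 = 0 := by nlinarith [sq_nonneg (x^2+y^2), sq_nonneg z]
  have hx : x = 0 := by nlinarith [sq_nonneg x, sq_nonneg y]
  have hy : y = 0 := by nlinarith [sq_nonneg x, sq_nonneg y]
  simp [hx, hy, hz]

lemma rho_pos {x y z : ℝ} (h : (x, y, z) ≠ (0, 0, 0)) : 0 < rho x y z :=
  Real.sqrt_pos.2 (rho_rad_pos h)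

lemma rho_sq (x y z : ℝ) : rho x y z ^ 2 = (x^2 + y^2)^2 + 16 * z^2 :=
  Real.sq_sqrt (by positivity)

/-- Hamilton's equations at time `t`, with the partial derivatives of `KH` worked out. -/
def HamODE (x y z px py pz : ℝ → ℝ) (t : ℝ) : Prop :=
  HasDerivAt x (px t - 1/2 * y t * pz t) t ∧
  HasDerivAt y (py t + 1/2 * x t * pz t) t ∧
  HasDerivAt z (1/2 * (x t * (py t + 1/2 * x t * pz t) - y t * (px t - 1/2 * y t * pz t))) t ∧
  HasDerivAt px (-(1/2 * pz t * (py t + 1/2 * x t * pz t))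
    - x t * (x t^2 + y t^2) / (4 * π * rho (x t) (y t) (z t)^3)) t ∧
  HasDerivAt py (1/2 * pz t * (px t - 1/2 * y t * pz t)
    - y t * (x t^2 + y t^2) / (4 * π * rho (x t) (y t) (z t)^3)) t ∧
  HasDerivAt pz (-(2 * z t / (π * rho (x t) (y t) (z t)^3))) t

/-- Derivative of the potential along a one-parameter variation of the radicand. -/
lemma hasDerivAt_potential {D : ℝ → ℝ} {D' a : ℝ} (hD : HasDerivAt D D' a) (h0 : 0 < D a) :
    HasDerivAt (fun b => 1 / (8 * π * Real.sqrt (D b)))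
      (-(D' / (16 * π * Real.sqrt (D a) ^ 3))) a := by
  have hs : Real.sqrt (D a) ≠ 0 := (Real.sqrt_pos.2 h0).ne'
  have hp := Real.pi_ne_zero
  have := ((hD.sqrt h0.ne').const_mul (8 * π)).fun_inv (by positivity)
  simp only [one_div]
  refine this.congr_deriv ?_
  field_simp
  ring

lemma KH_deriv_px (x y z px py pz : ℝ) :
    deriv (fun a => KH x y z a py pz) px = px - 1/2 * y * pz := by
  have : HasDerivAt (fun a => KH x y z a py pz) (px - 1/2 * y * pz) px := by
    unfold KH
    have h := (((((hasDerivAt_id px).sub_const (1/2 * y * pz)).pow 2).add_const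
      ((py + (1/2) * x * pz)^2)).const_mul (1/2)).sub_const
        (1 / (8 * π * Real.sqrt ((x^2 + y^2)^2 + 16 * z^2)))
    refine h.congr_deriv ?_
    simp
  exact this.deriv

lemma KH_deriv_py (x y z px py pz : ℝ) :
    deriv (fun a => KH x y z px a pz) py = py + 1/2 * x * pz := by
  have : HasDerivAt (fun a => KH x y z px a pz) (py + 1/2 * x * pz) py := by
    unfold KH
    have h := (((((hasDerivAt_id py).add_const (1/2 * x * pz)).pow 2).const_add
      ((px - (1/2) * y * pz)^2)).const_mul (1/2)).sub_const
        (1 / (8 * π * Real.sqrt ((x^2 + y^2)^2 + 16 * z^2)))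
    refine h.congr_deriv ?_
    simp
  exact this.deriv

lemma KH_deriv_pz (x y z px py pz : ℝ) :
    deriv (fun a => KH x y z px py a) pz
      = 1/2 * (x * (py + 1/2 * x * pz) - y * (px - 1/2 * y * pz)) := by
  have : HasDerivAt (fun a => KH x y z px py a)
      (1/2 * (x * (py + 1/2 * x * pz) - y * (px - 1/2 * y * pz))) pz := by
    unfold KH
    have h1 := (((hasDerivAt_id pz).const_mul (1/2 * y)).const_sub px).pow 2
    have h2 := (((hasDerivAt_id pz).const_mul (1/2 * x)).const_add py).pow 2
    have h := ((h1.add h2).const_mul (1/2)).sub_const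
        (1 / (8 * π * Real.sqrt ((x^2 + y^2)^2 + 16 * z^2)))
    refine h.congr_deriv ?_
    simp; ring
  exact this.deriv

lemma KH_deriv_x {x y z : ℝ} (px py pz : ℝ) (h0 : (x, y, z) ≠ (0, 0, 0)) :
    -deriv (fun a => KH a y z px py pz) x
      = -(1/2 * pz * (py + 1/2 * x * pz)) - x * (x^2 + y^2) / (4 * π * rho x y z^3) := by
  have hρ := (rho_pos h0).ne'
  have hp := Real.pi_ne_zero
  have : HasDerivAt (fun a => KH a y z px py pz)
      ((1/2 * pz * (py + 1/2 * x * pz)) + x * (x^2 + y^2) / (4 * π * rho x y z^3)) x := by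
    unfold KH
    have h1 := ((((hasDerivAt_id x).const_mul (1/2)).mul_const pz).const_add py).pow 2
    have hD : HasDerivAt (fun a => (a^2 + y^2)^2 + 16 * z^2) (4 * x * (x^2 + y^2)) x :=
      (((((hasDerivAt_id x).pow 2).add_const (y^2)).pow 2).add_const (16 * z^2)).congr_deriv
        (by simp; ring)
    have h2 := hasDerivAt_potential hD (rho_rad_pos h0)
    refine (((h1.const_add ((px - (1/2) * y * pz)^2)).const_mul (1/2)).sub h2).congr_deriv ?_
    change _ - -(_ / (16 * π * rho x y z ^ 3)) = _
    simp
    field_simp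
    ring
  rw [this.deriv]; ring

lemma KH_deriv_y {x y z : ℝ} (px py pz : ℝ) (h0 : (x, y, z) ≠ (0, 0, 0)) :
    -deriv (fun a => KH x a z px py pz) y
      = 1/2 * pz * (px - 1/2 * y * pz) - y * (x^2 + y^2) / (4 * π * rho x y z^3) := by
  have hρ := (rho_pos h0).ne'
  have hp := Real.pi_ne_zero
  have : HasDerivAt (fun a => KH x a z px py pz)
      (-(1/2 * pz * (px - 1/2 * y * pz)) + y * (x^2 + y^2) / (4 * π * rho x y z^3)) y := by
    unfold KH
    have h1 := ((((hasDerivAt_id y).const_mul (1/2)).mul_const pz).const_sub px).pow 2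
    have hD : HasDerivAt (fun a => (x^2 + a^2)^2 + 16 * z^2) (4 * y * (x^2 + y^2)) y :=
      (((((hasDerivAt_id y).pow 2).const_add (x^2)).pow 2).add_const (16 * z^2)).congr_deriv
        (by simp; ring)
    have h2 := hasDerivAt_potential hD (rho_rad_pos h0)
    refine (((h1.add_const ((py + (1/2) * x * pz)^2)).const_mul (1/2)).sub h2).congr_deriv ?_
    change _ - -(_ / (16 * π * rho x y z ^ 3)) = _
    simp
    field_simp
    ring
  rw [this.deriv]; ring

lemma KH_deriv_z {x y z : ℝ} (px py pz : ℝ) (h0 : (x, y, z) ≠ (0, 0, 0)) :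
    -deriv (fun a => KH x y a px py pz) z = -(2 * z / (π * rho x y z^3)) := by
  have hρ := (rho_pos h0).ne'
  have hp := Real.pi_ne_zero
  have : HasDerivAt (fun a => KH x y a px py pz) (2 * z / (π * rho x y z^3)) z := by
    unfold KH
    have hD : HasDerivAt (fun a => (x^2 + y^2)^2 + 16 * a^2) (32 * z) z :=
      ((((hasDerivAt_id z).pow 2).const_mul 16).const_add ((x^2 + y^2)^2)).congr_deriv
        (by simp; ring)
    have h2 := hasDerivAt_potential hD (rho_rad_pos h0)
    refine (h2.const_sub _).congr_deriv ?_
    change - -(_ / (16 * π * rho x y z ^ 3)) = _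
    field_simp
    ring
  rw [this.deriv]

lemma isSolutionOn_iff {I : Set ℝ} {x y z px py pz : ℝ → ℝ} :
    IsSolutionOn I x y z px py pz ↔ IsOpen I ∧ I.OrdConnected ∧ I.Nonempty ∧
      ∀ t ∈ I, (x t, y t, z t) ≠ (0, 0, 0) ∧ HamODE x y z px py pz t := by
  unfold IsSolutionOn
  constructor
  · rintro ⟨h1, h2, h3, h4, h5⟩
    refine ⟨h1, h2, h3, fun t ht => ⟨h4 t ht, ?_⟩⟩
    have := h5 t ht
    rwa [KH_deriv_px, KH_deriv_py, KH_deriv_pz, KH_deriv_x _ _ _ (h4 t ht),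
      KH_deriv_y _ _ _ (h4 t ht), KH_deriv_z _ _ _ (h4 t ht)] at this
  · rintro ⟨h1, h2, h3, h4⟩
    refine ⟨h1, h2, h3, fun t ht => (h4 t ht).1, fun t ht => ?_⟩
    rw [KH_deriv_px, KH_deriv_py, KH_deriv_pz, KH_deriv_x _ _ _ (h4 t ht).1,
      KH_deriv_y _ _ _ (h4 t ht).1, KH_deriv_z _ _ _ (h4 t ht).1]
    exact (h4 t ht).2

/-! ### Uniqueness, maximality and symmetries -/
/-- The Hamiltonian vector field of `KH` on `ℝ^6`. -/
noncomputable def hamField (q : ℝ × ℝ × ℝ × ℝ × ℝ × ℝ) : ℝ × ℝ × ℝ × ℝ × ℝ × ℝ :=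
  (q.2.2.2.1 - 1/2 * q.2.1 * q.2.2.2.2.2,
   q.2.2.2.2.1 + 1/2 * q.1 * q.2.2.2.2.2,
   1/2 * (q.1 * (q.2.2.2.2.1 + 1/2 * q.1 * q.2.2.2.2.2)
     - q.2.1 * (q.2.2.2.1 - 1/2 * q.2.1 * q.2.2.2.2.2)),
   -(1/2 * q.2.2.2.2.2 * (q.2.2.2.2.1 + 1/2 * q.1 * q.2.2.2.2.2))
     - q.1 * (q.1^2 + q.2.1^2) / (4 * π * rho q.1 q.2.1 q.2.2.1^3),
   1/2 * q.2.2.2.2.2 * (q.2.2.2.1 - 1/2 * q.2.1 * q.2.2.2.2.2)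
     - q.2.1 * (q.1^2 + q.2.1^2) / (4 * π * rho q.1 q.2.1 q.2.2.1^3),
   -(2 * q.2.2.1 / (π * rho q.1 q.2.1 q.2.2.1^3)))

lemma hamField_contDiffAt {q : ℝ × ℝ × ℝ × ℝ × ℝ × ℝ}
    (h : (q.1, q.2.1, q.2.2.1) ≠ (0, 0, 0)) : ContDiffAt ℝ 1 hamField q := by
  have hρ : ContDiffAt ℝ 1 (fun q : ℝ × ℝ × ℝ × ℝ × ℝ × ℝ => rho q.1 q.2.1 q.2.2.1) q :=
    ContDiffAt.sqrt (by fun_prop) (rho_rad_pos h).ne'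
  have h0 := rho_pos h
  have hp := Real.pi_pos
  unfold hamField
  refine ContDiffAt.prodMk (by fun_prop) (ContDiffAt.prodMk (by fun_prop)
    (ContDiffAt.prodMk (by fun_prop) (ContDiffAt.prodMk ?_ (ContDiffAt.prodMk ?_ ?_))))
  · exact ContDiffAt.sub (by fun_prop)
      (ContDiffAt.div (by fun_prop) (contDiffAt_const.mul (hρ.pow 3)) (by positivity))
  · exact ContDiffAt.sub (by fun_prop)
      (ContDiffAt.div (by fun_prop) (contDiffAt_const.mul (hρ.pow 3)) (by positivity))
  · exact (ContDiffAt.div (by fun_prop) (contDiffAt_const.mul (hρ.pow 3)) (by positivity)).neg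

lemma HamODE.hasDerivAt {x y z px py pz : ℝ → ℝ} {t : ℝ} (h : HamODE x y z px py pz t) :
    HasDerivAt (fun t => (x t, y t, z t, px t, py t, pz t))
      (hamField (x t, y t, z t, px t, py t, pz t)) t :=
  h.1.prodMk (h.2.1.prodMk (h.2.2.1.prodMk (h.2.2.2.1.prodMk (h.2.2.2.2.1.prodMk h.2.2.2.2.2))))

/-- Two integral curves of a vector field which is `C¹` along one of them, defined on a common
open interval, agree on it as soon as they agree at one time. -/
lemma integralCurve_eqOn {E : Type*} [NormedAddCommGroup E] [NormedSpace ℝ E] {v : E → E}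
    {f g : ℝ → E} {S : Set ℝ} {τ : ℝ} (hS : IsOpen S) (hS' : S.OrdConnected)
    (hv : ∀ t ∈ S, ContDiffAt ℝ 1 v (f t))
    (hf : ∀ t ∈ S, HasDerivAt f (v (f t)) t) (hg : ∀ t ∈ S, HasDerivAt g (v (g t)) t)
    (hτ : τ ∈ S) (h : f τ = g τ) : EqOn f g S := by
  have hloc : ∀ t ∈ S, f t = g t → f =ᶠ[nhds t] g := by
    intro t ht hfg
    obtain ⟨K, s, hs, hl⟩ := (hv t ht).exists_lipschitzOnWith
    refine ODE_solution_unique_of_eventually (v := fun _ => v) (s := fun _ => s) (K := K)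
      (Filter.Eventually.of_forall fun _ => hl) ?_ ?_ hfg
    · filter_upwards [hS.mem_nhds ht, (hf t ht).continuousAt.preimage_mem_nhds hs] with a ha hb
      exact ⟨hf a ha, hb⟩
    · filter_upwards [hS.mem_nhds ht,
        (hg t ht).continuousAt.preimage_mem_nhds (hfg ▸ hs)] with a ha hb
      exact ⟨hg a ha, hb⟩
  have hclop : S ⊆ {t | f =ᶠ[nhds t] g} := by
    refine hS'.isPreconnected.subset_of_closure_inter_subset ?_ ⟨τ, hτ, hloc τ hτ h⟩ ?_
    · exact isOpen_iff_mem_nhds.2 fun t ht => eventually_eventually_nhds.2 ht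
    · rintro t ⟨htc, htS⟩
      refine hloc t htS ?_
      have hfr : ∃ᶠ a in nhds t, f a = g a :=
        (mem_closure_iff_frequently.1 htc).mono fun a ha => ha.eq_of_nhds
      exact tendsto_nhds_unique_of_frequently_eq (hf t htS).continuousAt (hg t htS).continuousAt hfr
  exact fun t ht => (hclop ht).eq_of_nhds

/-- A maximal solution swallows every solution meeting it: by uniqueness the two glue to a
solution on the union of the intervals, which maximality forces to be `I`. -/
lemma maximal_absorbs {I I' : Set ℝ} {x y z px py pz x' y' z' px' py' pz' : ℝ → ℝ} {τ : ℝ}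
    (hsol : IsMaximalSolution I x y z px py pz) (hsol' : IsSolutionOn I' x' y' z' px' py' pz')
    (hτ : τ ∈ I) (hτ' : τ ∈ I')
    (heq : (x' τ, y' τ, z' τ, px' τ, py' τ, pz' τ) = (x τ, y τ, z τ, px τ, py τ, pz τ)) :
    I' ⊆ I ∧ ∀ t ∈ I', x' t = x t ∧ y' t = y t ∧ z' t = z t := by
  classical
  obtain ⟨hs, hmax⟩ := hsol
  obtain ⟨hI, hIc, hIn, h4⟩ := isSolutionOn_iff.1 hs
  obtain ⟨hI', hIc', hIn', h4'⟩ := isSolutionOn_iff.1 hsol'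
  have hE : EqOn (fun t => (x t, y t, z t, px t, py t, pz t))
      (fun t => (x' t, y' t, z' t, px' t, py' t, pz' t)) (I ∩ I') :=
    integralCurve_eqOn (hI.inter hI') (hIc.inter hIc')
      (fun t ht => hamField_contDiffAt (h4 t ht.1).1)
      (fun t ht => (h4 t ht.1).2.hasDerivAt) (fun t ht => (h4' t ht.2).2.hasDerivAt)
      ⟨hτ, hτ'⟩ heq.symm
  have hE' : ∀ t ∈ I', t ∈ I → x t = x' t ∧ y t = y' t ∧ z t = z' t ∧ px t = px' t ∧
      py t = py' t ∧ pz t = pz' t := by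
    intro t h1 h2
    simpa only [Prod.mk.injEq] using hE ⟨h2, h1⟩
  have key : I ∪ I' = I := by
    refine hmax (I ∪ I') (fun t => if t ∈ I then x t else x' t)
      (fun t => if t ∈ I then y t else y' t) (fun t => if t ∈ I then z t else z' t)
      (fun t => if t ∈ I then px t else px' t) (fun t => if t ∈ I then py t else py' t)
      (fun t => if t ∈ I then pz t else pz' t) ?_ subset_union_left ?_
    · refine isSolutionOn_iff.2 ⟨hI.union hI', ?_, hIn.mono subset_union_left, ?_⟩
      · exact (IsPreconnected.union τ hτ hτ' hIc.isPreconnected hIc'.isPreconnected).ordConnected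
      · intro t ht
        by_cases hmem : t ∈ I
        · obtain ⟨h0, h1, h2, h3, h5, h6, h7⟩ := h4 t hmem
          have hloc : ∀ f f' : ℝ → ℝ, (fun t => if t ∈ I then f t else f' t) =ᶠ[nhds t] f := by
            intro f f'
            filter_upwards [hI.mem_nhds hmem] with a ha
            simp [ha]
          refine ⟨by simpa [hmem] using h0, ?_⟩
          unfold HamODE
          simp only [hmem, if_true]
          exact ⟨h1.congr_of_eventuallyEq (hloc _ _), h2.congr_of_eventuallyEq (hloc _ _),
            h3.congr_of_eventuallyEq (hloc _ _), h5.congr_of_eventuallyEq (hloc _ _),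
            h6.congr_of_eventuallyEq (hloc _ _), h7.congr_of_eventuallyEq (hloc _ _)⟩
        · have hmem' : t ∈ I' := ht.resolve_left hmem
          obtain ⟨h0, h1, h2, h3, h5, h6, h7⟩ := h4' t hmem'
          have hloc : ∀ f f' : ℝ → ℝ, (∀ t ∈ I', t ∈ I → f t = f' t) →
              (fun t => if t ∈ I then f t else f' t) =ᶠ[nhds t] f' := by
            intro f f' hff
            filter_upwards [hI'.mem_nhds hmem'] with a ha
            by_cases haI : a ∈ I
            · simp [haI, hff a ha haI]
            · simp [haI]
          refine ⟨by simpa [hmem] using h0, ?_⟩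
          unfold HamODE
          simp only [hmem, if_false]
          exact ⟨h1.congr_of_eventuallyEq (hloc _ _ fun t a b => (hE' t a b).1),
            h2.congr_of_eventuallyEq (hloc _ _ fun t a b => (hE' t a b).2.1),
            h3.congr_of_eventuallyEq (hloc _ _ fun t a b => (hE' t a b).2.2.1),
            h5.congr_of_eventuallyEq (hloc _ _ fun t a b => (hE' t a b).2.2.2.1),
            h6.congr_of_eventuallyEq (hloc _ _ fun t a b => (hE' t a b).2.2.2.2.1),
            h7.congr_of_eventuallyEq (hloc _ _ fun t a b => (hE' t a b).2.2.2.2.2)⟩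
    · intro t ht
      simp [ht]
  have hsub : I' ⊆ I := fun t ht => key ▸ Or.inr ht
  refine ⟨hsub, fun t ht => ?_⟩
  obtain ⟨h1, h2, h3, -⟩ := hE' t ht (hsub ht)
  exact ⟨h1.symm, h2.symm, h3.symm⟩

/-- The symmetries of the system: for `α + iβ ≠ 0` put `L = α² + β²`. Multiplying `x + iy` by
`α + iβ` (a rotation composed with the Carnot dilation by `√L`) and slowing time down by the
factor `L` maps solutions to solutions. The time change is `t ↦ a + L (t - b)`, so that time `b`
of the original solution becomes time `a`. -/
lemma symm_solution {I : Set ℝ} {x y z px py pz : ℝ → ℝ} {α β L : ℝ} (hL : L = α^2 + β^2)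
    (hL0 : 0 < L) (a b : ℝ) (hsol : IsSolutionOn I x y z px py pz) :
    IsSolutionOn {t | b + (t - a) / L ∈ I}
      (fun t => α * x (b + (t - a) / L) - β * y (b + (t - a) / L))
      (fun t => β * x (b + (t - a) / L) + α * y (b + (t - a) / L))
      (fun t => L * z (b + (t - a) / L))
      (fun t => (α * px (b + (t - a) / L) - β * py (b + (t - a) / L)) / L)
      (fun t => (β * px (b + (t - a) / L) + α * py (b + (t - a) / L)) / L)
      (fun t => pz (b + (t - a) / L) / L) := by
  obtain ⟨hI, hIc, ⟨t₁, ht₁⟩, h4⟩ := isSolutionOn_iff.1 hsol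
  have hcont : Continuous fun t => b + (t - a) / L := by fun_prop
  have hmono : Monotone fun t => b + (t - a) / L := fun s t h => by
    have : (s - a) / L ≤ (t - a) / L := by gcongr
    simpa using this
  refine isSolutionOn_iff.2 ⟨hI.preimage hcont, hIc.preimage_mono hmono,
    ⟨a + L * (t₁ - b), ?_⟩, ?_⟩
  · have : b + (a + L * (t₁ - b) - a) / L = t₁ := by field_simp; ring
    change b + (a + L * (t₁ - b) - a) / L ∈ I
    rwa [this]
  · intro t ht
    obtain ⟨h0, h1, h2, h3, h5, h6, h7⟩ := h4 _ ht
    have hB : HasDerivAt (fun t => b + (t - a) / L) (1 / L) t :=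
      (((hasDerivAt_id t).sub_const a).div_const L).const_add b
    have hρ := rho_pos h0
    have hp := Real.pi_pos
    replace h1 := h1.comp t hB
    replace h2 := h2.comp t hB
    replace h3 := h3.comp t hB
    replace h5 := h5.comp t hB
    replace h6 := h6.comp t hB
    replace h7 := h7.comp t hB
    unfold HamODE
    beta_reduce
    set T := b + (t - a) / L
    have hR : (α * x T - β * y T)^2 + (β * x T + α * y T)^2 = L * (x T^2 + y T^2) := by
      rw [hL]; ring
    have hrho : rho (α * x T - β * y T) (β * x T + α * y T) (L * z T)
        = L * rho (x T) (y T) (z T) := by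
      unfold rho
      rw [hR, show (L * (x T^2 + y T^2))^2 + 16 * (L * z T)^2
        = L^2 * ((x T^2 + y T^2)^2 + 16 * z T^2) by ring, Real.sqrt_mul (by positivity),
        Real.sqrt_sq hL0.le]
    refine ⟨?_, ?_, ?_, ?_, ?_, ?_, ?_⟩
    · intro hc
      simp only [Prod.mk.injEq] at hc
      rw [hc.1, hc.2.1, hc.2.2] at hrho
      have : rho 0 0 0 = 0 := by simp [rho]
      rw [this] at hrho
      have := mul_pos hL0 hρ
      linarith
    · refine ((h1.const_mul α).sub (h2.const_mul β)).congr_deriv ?_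
      field_simp
      ring
    · refine ((h1.const_mul β).add (h2.const_mul α)).congr_deriv ?_
      field_simp
      ring
    · refine (h3.const_mul L).congr_deriv ?_
      field_simp
      rw [hL]
      ring
    · rw [hR, hrho]
      refine (((h5.const_mul α).sub (h6.const_mul β)).div_const L).congr_deriv ?_
      field_simp
      ring
    · rw [hR, hrho]
      refine (((h5.const_mul β).add (h6.const_mul α)).div_const L).congr_deriv ?_
      field_simp
      ring
    · rw [hrho]
      refine (h7.div_const L).congr_deriv ?_
      field_simp

/-! ### The drift of `s` over a loop of the reduced system -/

/-- The positive root of `μ² = q μ + 1`, i.e. the inverse of `μ ↦ μ - μ⁻¹`. -/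
noncomputable def muRoot (q : ℝ) : ℝ := (q + Real.sqrt (q^2 + 4)) / 2

lemma muRoot_pos (q : ℝ) : 0 < muRoot q := by
  have h : |q| < Real.sqrt (q^2 + 4) := by
    rw [← Real.sqrt_sq_eq_abs]
    exact Real.sqrt_lt_sqrt (sq_nonneg q) (by linarith)
  have := neg_abs_le q
  unfold muRoot
  linarith

lemma muRoot_eq (q : ℝ) : muRoot q ^ 2 = q * muRoot q + 1 := by
  have := Real.sq_sqrt (show 0 ≤ q^2 + 4 by positivity)
  unfold muRoot
  linarith

/-- The separating slope `Θ`. With `j = J / p_θ` and `m = √(1 + v²)`, the quantity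
`N(v) = (2 + v² - j v) / (2 √m)` is below `Θ` where `v ≥ -j` and above it where `v ≤ -j`, when
both are compared at equal values of `q = (v + j)² / m`. It is the larger of `N(-j)` and of the
value of `N` for `j = 0`, written in terms of `q`. -/
noncomputable def sepSlope (j q : ℝ) : ℝ :=
  max ((1 + j^2) / Real.sqrt (Real.sqrt (1 + j^2)))
    ((muRoot q ^ 2 + 1) / (2 * Real.sqrt (muRoot q)))

lemma sepSlope_pos (j q : ℝ) : 0 < sepSlope j q :=
  lt_max_of_lt_left (by positivity)

lemma sepSlope_continuous (j : ℝ) : Continuous (sepSlope j) := by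
  have h : Continuous muRoot := by unfold muRoot; fun_prop
  unfold sepSlope
  refine continuous_const.max (((h.pow 2).add_const 1).div ((continuous_sqrt.comp h).const_mul 2) ?_)
  intro q
  have := Real.sqrt_pos.2 (muRoot_pos q)
  exact (mul_pos two_pos this).ne'

lemma le_of_root {m μ q : ℝ} (hμ : 0 < μ) (h1 : m^2 ≤ q * m + 1)
    (h2 : q * μ + 1 ≤ μ^2) : m ≤ μ := by
  by_contra hlt
  push Not at hlt
  have : m + μ ≤ q := by
    by_contra h
    push Not at h
    nlinarith [mul_pos (sub_pos.2 hlt) (sub_pos.2 h)]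
  nlinarith

lemma sq_add_one_div_sqrt_mono {m n : ℝ} (hm : 1 ≤ m) (hmn : m ≤ n) :
    (m^2 + 1) / (2 * Real.sqrt m) ≤ (n^2 + 1) / (2 * Real.sqrt n) := by
  have h1 : 1 ≤ Real.sqrt m := Real.one_le_sqrt.2 hm
  have h2 : Real.sqrt m ≤ Real.sqrt n := Real.sqrt_le_sqrt hmn
  have e1 := Real.sq_sqrt (show 0 ≤ m by linarith)
  have e2 := Real.sq_sqrt (show 0 ≤ n by linarith)
  set r := Real.sqrt m
  set s := Real.sqrt n
  rw [div_le_div_iff₀ (by linarith) (by linarith), ← e1, ← e2]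
  have hrs : 1 ≤ r * s := by nlinarith
  have h3 : 1 ≤ s^2 + s * r + r^2 := by nlinarith
  have : 0 ≤ (s - r) * (r * s * (s^2 + s * r + r^2) - 1) :=
    mul_nonneg (by linarith) (by nlinarith)
  nlinarith

lemma div_sqrt_sqrt_mono {a b : ℝ} (ha : 0 ≤ a) (hab : a ≤ b) :
    a / Real.sqrt (Real.sqrt (1 + a^2)) ≤ b / Real.sqrt (Real.sqrt (1 + b^2)) := by
  have e1 : Real.sqrt (Real.sqrt (1 + a^2)) ^ 4 = 1 + a^2 := by
    rw [show (4 : ℕ) = 2 * 2 by rfl, pow_mul, Real.sq_sqrt (by positivity),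
      Real.sq_sqrt (by positivity)]
  have e2 : Real.sqrt (Real.sqrt (1 + b^2)) ^ 4 = 1 + b^2 := by
    rw [show (4 : ℕ) = 2 * 2 by rfl, pow_mul, Real.sq_sqrt (by positivity),
      Real.sq_sqrt (by positivity)]
  rw [div_le_div_iff₀ (by positivity) (by positivity)]
  have hb : 0 ≤ b := ha.trans hab
  refine le_of_pow_le_pow_left₀ (n := 4) (by norm_num) (by positivity) ?_
  rw [mul_pow, mul_pow, e1, e2]
  have h2 : a^2 ≤ b^2 := by gcongr
  have h4 : a^4 ≤ b^4 := by gcongr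
  nlinarith [mul_nonneg (sq_nonneg a) (sq_nonneg b), mul_nonneg (mul_nonneg (sq_nonneg a) (sq_nonneg b)) (sub_nonneg.2 h2)]

/-- `N` is monotone in `-v` on `v ≤ 0`. -/
lemma slope_mono {j a b : ℝ} (hj : 0 ≤ j) (ha : 0 ≤ a) (hab : a ≤ b) :
    (2 + a^2 + j * a) / (2 * Real.sqrt (Real.sqrt (1 + a^2)))
      ≤ (2 + b^2 + j * b) / (2 * Real.sqrt (Real.sqrt (1 + b^2))) := by
  have key : ∀ c : ℝ, (2 + c^2 + j * c) / (2 * Real.sqrt (Real.sqrt (1 + c^2)))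
      = (Real.sqrt (1 + c^2) ^ 2 + 1) / (2 * Real.sqrt (Real.sqrt (1 + c^2)))
        + j / 2 * (c / Real.sqrt (Real.sqrt (1 + c^2))) := by
    intro c
    rw [Real.sq_sqrt (by positivity)]
    have : Real.sqrt (Real.sqrt (1 + c^2)) ≠ 0 := by positivity
    field_simp
    ring
  rw [key, key]
  refine add_le_add (sq_add_one_div_sqrt_mono ?_ ?_)
    (mul_le_mul_of_nonneg_left (div_sqrt_sqrt_mono ha hab) (by linarith))
  · exact Real.one_le_sqrt.2 (by nlinarith)
  · exact Real.sqrt_le_sqrt (by nlinarith)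

lemma slope_self (j : ℝ) : (2 + j^2 + j * j) / (2 * Real.sqrt (Real.sqrt (1 + j^2)))
    = (1 + j^2) / Real.sqrt (Real.sqrt (1 + j^2)) := by
  have : Real.sqrt (Real.sqrt (1 + j^2)) ≠ 0 := by positivity
  field_simp
  ring

lemma slope_le_sepSlope {j v : ℝ} (hj : 0 ≤ j) (hv : -j ≤ v) :
    (2 + v^2 - j * v) / (2 * Real.sqrt (Real.sqrt (1 + v^2)))
      ≤ sepSlope j ((v + j)^2 / Real.sqrt (1 + v^2)) := by
  have hm1 : 1 ≤ Real.sqrt (1 + v^2) := Real.one_le_sqrt.2 (by nlinarith)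
  have hm2 : Real.sqrt (1 + v^2) ^ 2 = 1 + v^2 := Real.sq_sqrt (by positivity)
  rcases le_total 0 v with h | h
  · -- here `N(v)` is below its value for `j = 0`, and `m ≤ μ(q)` because `v² ≤ (v + j)²`
    refine le_trans ?_ (le_max_right _ _)
    set m := Real.sqrt (1 + v^2)
    have hq := muRoot_eq ((v + j)^2 / m)
    have hqp := muRoot_pos ((v + j)^2 / m)
    set μ := muRoot ((v + j)^2 / m)
    have hle : m ≤ μ := by
      refine le_of_root hqp ?_ hq.ge
      rw [div_mul_cancel₀ _ (by positivity), hm2]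
      nlinarith [mul_nonneg h hj, mul_nonneg hj hj]
    refine le_trans ?_ (sq_add_one_div_sqrt_mono hm1 hle)
    rw [hm2]
    gcongr
    nlinarith [mul_nonneg hj h]
  · refine le_trans ?_ (le_max_left _ _)
    rw [← slope_self]
    have := slope_mono hj (neg_nonneg.2 h) (show -v ≤ j by linarith)
    rwa [neg_sq, mul_neg, ← sub_eq_add_neg] at this

lemma sepSlope_le_slope {j v : ℝ} (hj : 0 ≤ j) (hv : v ≤ -j) :
    sepSlope j ((v + j)^2 / Real.sqrt (1 + v^2))
      ≤ (2 + v^2 - j * v) / (2 * Real.sqrt (Real.sqrt (1 + v^2))) := by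
  have hm1 : 1 ≤ Real.sqrt (1 + v^2) := Real.one_le_sqrt.2 (by nlinarith)
  have hm2 : Real.sqrt (1 + v^2) ^ 2 = 1 + v^2 := Real.sq_sqrt (by positivity)
  refine max_le ?_ ?_
  · rw [← slope_self]
    have := slope_mono hj hj (show j ≤ -v by linarith)
    rwa [neg_sq, mul_neg, ← sub_eq_add_neg] at this
  · set m := Real.sqrt (1 + v^2)
    have hq0 : 0 ≤ (v + j)^2 / m := by positivity
    have hq := muRoot_eq ((v + j)^2 / m)
    have hqp := muRoot_pos ((v + j)^2 / m)
    set μ := muRoot ((v + j)^2 / m)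
    have h1μ : 1 ≤ μ := by nlinarith [mul_nonneg hq0 hqp.le]
    have hle : μ ≤ m := by
      refine le_of_root (by linarith) hq.le ?_
      rw [div_mul_cancel₀ _ (by positivity), hm2]
      nlinarith [mul_nonneg (show 0 ≤ -v - j by linarith) hj, mul_nonneg hj hj]
    refine (sq_add_one_div_sqrt_mono h1μ hle).trans ?_
    rw [hm2]
    gcongr
    nlinarith [mul_nonneg hj (show 0 ≤ -v by linarith)]

lemma one_lt_sepSlope {j : ℝ} (hj : 0 < j) (q : ℝ) : 1 < sepSlope j q := by
  refine lt_max_of_lt_left ?_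
  rw [lt_div_iff₀ (by positivity), one_mul]
  have h1 : 1 < 1 + j^2 := by nlinarith
  have h2 : Real.sqrt (1 + j^2) < 1 + j^2 := (Real.sqrt_lt' (by linarith)).2 (by nlinarith)
  have h3 : 1 < Real.sqrt (1 + j^2) := by rw [Real.lt_sqrt (by norm_num)]; linarith
  have h4 : Real.sqrt (Real.sqrt (1 + j^2)) < Real.sqrt (1 + j^2) :=
    (Real.sqrt_lt' (by linarith)).2 (by nlinarith)
  linarith

/-- A function with nonnegative derivative whose derivative at the left end is positive has
a strictly larger value at the right end. -/
lemma lt_of_deriv_nonneg_of_pos {F F' : ℝ → ℝ} {a b : ℝ} (hab : a < b)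
    (hF : ∀ t ∈ Icc a b, HasDerivAt F (F' t) t) (h0 : ∀ t ∈ Icc a b, 0 ≤ F' t)
    (ha : 0 < F' a) : F a < F b := by
  have hmono : MonotoneOn F (Icc a b) := by
    refine monotoneOn_of_hasDerivWithinAt_nonneg (f' := F') (convex_Icc a b)
      (fun t ht => (hF t ht).continuousAt.continuousWithinAt) ?_ ?_
    · exact fun t ht => (hF t (interior_subset ht)).hasDerivWithinAt
    · exact fun t ht => h0 t (interior_subset ht)
  have hA := left_mem_Icc.2 hab.le
  have hB := right_mem_Icc.2 hab.le
  refine lt_of_le_of_ne (hmono hA hB hab.le) fun he => ?_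
  -- otherwise `F` is constant on the interval, so its derivative at `a` vanishes
  have hconst : ∀ t ∈ Icc a b, F t = F a := fun t ht =>
    le_antisymm ((hmono ht hB ht.2).trans he.ge) (hmono hA ht ht.1)
  have h1 : HasDerivWithinAt F 0 (Icc a b) a :=
    (hasDerivWithinAt_const a (Icc a b) (F a)).congr hconst rfl
  have h2 := (uniqueDiffOn_Icc hab a hA).eq_deriv _ h1 (hF a hA).hasDerivWithinAt
  linarith

lemma le_of_deriv_nonneg {F F' : ℝ → ℝ} {a b : ℝ} (hab : a < b)
    (hF : ∀ t ∈ Icc a b, HasDerivAt F (F' t) t) (h0 : ∀ t ∈ Icc a b, 0 ≤ F' t) : F a ≤ F b := by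
  refine monotoneOn_of_hasDerivWithinAt_nonneg (f' := F') (convex_Icc a b)
      (fun t ht => (hF t ht).continuousAt.continuousWithinAt) ?_ ?_
      (left_mem_Icc.2 hab.le) (right_mem_Icc.2 hab.le) hab.le
  · exact fun t ht => (hF t (interior_subset ht)).hasDerivWithinAt
  · exact fun t ht => h0 t (interior_subset ht)

/-- The sign of the drift of `s` over a loop of the reduced system, for `p_θ > 0`: the corrected
coordinate `s + Ψ(Y) / (2 p)`, with `Ψ' = 1 / Θ`, is monotone, and the correction is the same at
both ends. -/
lemma drift_of_pos {J p M : ℝ} {v Y s ρ : ℝ → ℝ} {a b : ℝ} (hab : a < b) (hp : 0 < p)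
    (hJ : 0 ≤ J) (hρ : ∀ t ∈ Icc a b, 0 < ρ t)
    (hY : ∀ t ∈ Icc a b, HasDerivAt Y (-((J + p * v t) * (p * (2 + v t^2) - J * v t)
      / (Real.sqrt (1 + v t^2) * Real.sqrt (Real.sqrt (1 + v t^2)) * ρ t))) t)
    (hs : ∀ t ∈ Icc a b, HasDerivAt s ((J + p * v t) / (Real.sqrt (1 + v t^2) * ρ t)) t)
    (hE : ∀ t ∈ Icc a b, Y t^2 + (J + p * v t)^2 / Real.sqrt (1 + v t^2) = M)
    (hYab : Y a = Y b) (hva : v a = 0) :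
    s a ≤ s b ∧ (0 < J → s a < s b) := by
  set j := J / p with hj
  have hJj : J = p * j := by rw [hj]; field_simp
  have hj0 : 0 ≤ j := by positivity
  set φ : ℝ → ℝ := fun η => 1 / sepSlope j ((M - η^2) / p^2) with hφ
  have hφc : Continuous φ := by
    refine continuous_const.div ((sepSlope_continuous j).comp (by fun_prop)) ?_
    exact fun η => (sepSlope_pos _ _).ne'
  set Ψ : ℝ → ℝ := fun y => ∫ η in (0:ℝ)..y, φ η
  have hΨ : ∀ y, HasDerivAt Ψ (φ y) y := fun y =>
    intervalIntegral.integral_hasDerivAt_right (hφc.intervalIntegrable _ _)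
      (hφc.stronglyMeasurableAtFilter _ _) hφc.continuousAt
  set N : ℝ → ℝ := fun w => (2 + w^2 - j * w) / (2 * Real.sqrt (Real.sqrt (1 + w^2))) with hN
  set T : ℝ → ℝ := fun w => sepSlope j ((w + j)^2 / Real.sqrt (1 + w^2)) with hT
  have hTpos : ∀ w, 0 < T w := fun w => sepSlope_pos _ _
  have hF : ∀ t ∈ Icc a b, HasDerivAt (fun t => s t + 1 / (2 * p) * Ψ (Y t))
      (p / (Real.sqrt (1 + v t^2) * ρ t * T (v t)) * ((v t + j) * (T (v t) - N (v t)))) t := by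
    intro t ht
    have hρt := hρ t ht
    have hq : (M - Y t^2) / p^2 = (v t + j)^2 / Real.sqrt (1 + v t^2) := by
      rw [← hE t ht, hJj]
      field_simp
      ring
    have h := (hs t ht).add (((hΨ (Y t)).comp t (hY t ht)).const_mul (1 / (2 * p)))
    refine h.congr_deriv ?_
    have hTt := hTpos (v t)
    have hφt : φ (Y t) = 1 / T (v t) := by rw [hφ, hT]; simp only [hq]
    rw [hφt, hN, hJj]
    have h1 : 0 < Real.sqrt (1 + v t^2) := by positivity
    have h2 : 0 < Real.sqrt (Real.sqrt (1 + v t^2)) := by positivity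
    field_simp
    ring
  have hnn : ∀ w, 0 ≤ (w + j) * (T w - N w) := by
    intro w
    rcases le_total (-j) w with h | h
    · exact mul_nonneg (by linarith) (sub_nonneg.2 (slope_le_sepSlope hj0 h))
    · exact mul_nonneg_of_nonpos_of_nonpos (by linarith) (sub_nonpos.2 (sepSlope_le_slope hj0 h))
  have hF0 : ∀ t ∈ Icc a b, 0 ≤
      p / (Real.sqrt (1 + v t^2) * ρ t * T (v t)) * ((v t + j) * (T (v t) - N (v t))) := by
    intro t ht
    have := hρ t ht
    have := hTpos (v t)
    exact mul_nonneg (by positivity) (hnn _)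
  constructor
  · have := le_of_deriv_nonneg hab hF hF0
    simp only [hYab] at this
    linarith
  · intro hJ0
    have hjpos : 0 < j := by positivity
    have := lt_of_deriv_nonneg_of_pos hab hF hF0 (by
      have h1 := hρ a (left_mem_Icc.2 hab.le)
      have h2 := hTpos (v a)
      have h3 : N (v a) = 1 := by simp [hN, hva]
      have h4 : 1 < T (v a) := one_lt_sepSlope hjpos _
      have h5 : 0 < v a + j := by rw [hva]; linarith
      rw [h3]
      exact mul_pos (by positivity) (mul_pos h5 (by linarith)))
    simp only [hYab] at this
    linarith

/-- Over a loop of the reduced system `s` does not decrease if `J ≥ 0`, and increases if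
`J > 0`. -/
lemma drift {J p M : ℝ} {v Y s ρ : ℝ → ℝ} {a b : ℝ} (hab : a < b)
    (hJ : 0 ≤ J) (hρ : ∀ t ∈ Icc a b, 0 < ρ t)
    (hY : ∀ t ∈ Icc a b, HasDerivAt Y (-((J + p * v t) * (p * (2 + v t^2) - J * v t)
      / (Real.sqrt (1 + v t^2) * Real.sqrt (Real.sqrt (1 + v t^2)) * ρ t))) t)
    (hs : ∀ t ∈ Icc a b, HasDerivAt s ((J + p * v t) / (Real.sqrt (1 + v t^2) * ρ t)) t)
    (hE : ∀ t ∈ Icc a b, Y t^2 + (J + p * v t)^2 / Real.sqrt (1 + v t^2) = M)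
    (hYab : Y a = Y b) (hva : v a = 0) :
    s a ≤ s b ∧ (0 < J → s a < s b) := by
  rcases lt_trichotomy p 0 with hp | hp | hp
  · -- the reflection `v ↦ -v`, `Y ↦ -Y`, `p ↦ -p` preserves the reduced system
    refine drift_of_pos (p := -p) (M := M) (v := fun t => -v t) (Y := fun t => -Y t) hab
      (by linarith) hJ hρ ?_ ?_ ?_ (by simp [hYab]) (by simp [hva])
    · intro t ht
      refine (hY t ht).neg.congr_deriv ?_
      simp only [neg_sq, neg_mul_neg]
      ring
    · intro t ht
      simpa only [neg_sq, neg_mul_neg] using hs t ht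
    · intro t ht
      simpa only [neg_sq, neg_mul_neg] using hE t ht
  · have h0 : ∀ t ∈ Icc a b, 0 ≤ (J + p * v t) / (Real.sqrt (1 + v t^2) * ρ t) := by
      intro t ht
      have := hρ t ht
      rw [hp, zero_mul, add_zero]
      positivity
    refine ⟨le_of_deriv_nonneg hab hs h0, fun hJ0 => lt_of_deriv_nonneg_of_pos hab hs h0 ?_⟩
    have := hρ a (left_mem_Icc.2 hab.le)
    rw [hp, zero_mul, add_zero]
    exact div_pos hJ0 (mul_pos (by positivity) this)
  · exact drift_of_pos hab hp hJ hρ hY hs hE hYab hva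

/-! ### Conserved quantities and the reduced variables -/

lemma energy_zero {x y z px py pz : ℝ} (h0 : (x, y, z) ≠ (0, 0, 0))
    (hH : KH x y z px py pz = 0) :
    (px - 1/2 * y * pz)^2 + (py + 1/2 * x * pz)^2 = 1 / (4 * π * rho x y z) := by
  have hρ := rho_pos h0
  have hp := Real.pi_pos
  unfold KH at hH
  change _ - 1 / (8 * π * rho x y z) = 0 at hH
  have : 1 / (4 * π * rho x y z) = 2 * (1 / (8 * π * rho x y z)) := by
    field_simp
    norm_num
  rw [this]
  linarith

lemma jmom_hasDerivAt {x y z px py pz : ℝ → ℝ} {t : ℝ} (h : HamODE x y z px py pz t)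
    (h0 : (x t, y t, z t) ≠ (0, 0, 0)) (hH : KH (x t) (y t) (z t) (px t) (py t) (pz t) = 0) :
    HasDerivAt (fun t => Jmom (x t) (y t) (z t) (px t) (py t) (pz t)) 0 t := by
  obtain ⟨h1, h2, h3, h5, h6, h7⟩ := h
  have hρ := rho_pos h0
  have hp := Real.pi_pos
  have hE := energy_zero h0 hH
  have hr := rho_sq (x t) (y t) (z t)
  unfold Jmom
  refine (((h1.mul h5).add (h2.mul h6)).add ((h3.const_mul 2).mul h7)).congr_deriv ?_
  set ρ := rho (x t) (y t) (z t)
  -- by homogeneity of degree `-2` under dilations this derivative is `2 H`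
  trans ((px t - 1/2 * y t * pz t)^2 + (py t + 1/2 * x t * pz t)^2)
      - (((x t)^2 + (y t)^2)^2 + 16 * (z t)^2) / (4 * π * ρ^3)
  · field_simp
    ring
  · rw [hE, ← hr]
    field_simp
    ring

lemma pTheta_hasDerivAt {x y z px py pz : ℝ → ℝ} {t : ℝ} (h : HamODE x y z px py pz t)
    (h0 : (x t, y t, z t) ≠ (0, 0, 0)) :
    HasDerivAt (fun t => pTheta (x t) (y t) (px t) (py t)) 0 t := by
  obtain ⟨h1, h2, h3, h5, h6, h7⟩ := h
  have hρ := rho_pos h0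
  have hp := Real.pi_pos
  unfold pTheta
  refine ((h1.mul h6).sub (h2.mul h5)).congr_deriv ?_
  field_simp
  ring

/-- The velocity coordinate transverse to the dilations, `Y = (b - v a) / √m`, where
`a = x X + y Y'` and `b = x Y' - y X` are the radial and angular parts of the velocity
`(X, Y')`, `v = 4z / (x² + y²) = tan u` and `m = √(1 + v²)`. -/
noncomputable def transv (x y z px py pz : ℝ) : ℝ :=
  (x * py - y * px + 1/2 * (x^2 + y^2) * pz - 4 * z / (x^2 + y^2) * (x * px + y * py))
    / Real.sqrt (Real.sqrt (1 + (4 * z / (x^2 + y^2))^2))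

lemma rho_eq_mul {x y z : ℝ} (hR : 0 < x^2 + y^2) :
    rho x y z = (x^2 + y^2) * Real.sqrt (1 + (4 * z / (x^2 + y^2))^2) := by
  unfold rho
  rw [show (x^2 + y^2)^2 + 16 * z^2 = (x^2 + y^2)^2 * (1 + (4 * z / (x^2 + y^2))^2) by
    field_simp; ring, Real.sqrt_mul (by positivity), Real.sqrt_sq hR.le]

/-- The identity `a² + b² = (x² + y²) (X² + Y'²)`, with the energy relation inserted. -/
lemma radial_angular {x y z px py pz : ℝ} (hR : 0 < x^2 + y^2) (h0 : (x, y, z) ≠ (0, 0, 0))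
    (hH : KH x y z px py pz = 0) :
    (x * px + y * py)^2 + (x * py - y * px + 1/2 * (x^2 + y^2) * pz)^2
      = 1 / (4 * π * Real.sqrt (1 + (4 * z / (x^2 + y^2))^2)) := by
  have hp := Real.pi_pos
  have hE := energy_zero h0 hH
  rw [rho_eq_mul hR] at hE
  trans (x^2 + y^2) * ((px - 1/2 * y * pz)^2 + (py + 1/2 * x * pz)^2)
  · ring
  · rw [hE]
    field_simp

lemma transv_energy {x y z px py pz : ℝ} (hR : 0 < x^2 + y^2) (h0 : (x, y, z) ≠ (0, 0, 0))
    (hH : KH x y z px py pz = 0) :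
    transv x y z px py pz ^ 2
      + (Jmom x y z px py pz + pTheta x y px py * (4 * z / (x^2 + y^2)))^2
        / Real.sqrt (1 + (4 * z / (x^2 + y^2))^2) = 1 / (4 * π) := by
  have hp := Real.pi_pos
  have hE := radial_angular hR h0 hH
  have hm2 : Real.sqrt (1 + (4 * z / (x^2 + y^2))^2) ^ 2 = 1 + (4 * z / (x^2 + y^2))^2 :=
    Real.sq_sqrt (by positivity)
  have hG : Jmom x y z px py pz + pTheta x y px py * (4 * z / (x^2 + y^2))
      = (x * px + y * py) + (x * py - y * px + 1/2 * (x^2 + y^2) * pz) * (4 * z / (x^2 + y^2)) := by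
    unfold Jmom pTheta
    field_simp
    ring
  have hm : 0 < Real.sqrt (1 + (4 * z / (x^2 + y^2))^2) := by positivity
  rw [hG]
  unfold transv
  rw [div_pow, Real.sq_sqrt hm.le]
  set m := Real.sqrt (1 + (4 * z / (x^2 + y^2))^2)
  set v := 4 * z / (x^2 + y^2)
  set a := x * px + y * py
  set b := x * py - y * px + 1/2 * (x^2 + y^2) * pz
  trans m^2 * (a^2 + b^2) / m
  · rw [hm2]
    ring
  · rw [hE]
    field_simp

lemma sCoord_hasDerivAt {x y z px py pz : ℝ → ℝ} {t : ℝ} (h : HamODE x y z px py pz t)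
    (hR : 0 < x t^2 + y t^2) (h0 : (x t, y t, z t) ≠ (0, 0, 0)) :
    HasDerivAt (fun t => sCoord (x t) (y t) (z t))
      ((Jmom (x t) (y t) (z t) (px t) (py t) (pz t)
          + pTheta (x t) (y t) (px t) (py t) * (4 * z t / (x t^2 + y t^2)))
        / (Real.sqrt (1 + (4 * z t / (x t^2 + y t^2))^2) * rho (x t) (y t) (z t))) t := by
  obtain ⟨h1, h2, h3, h5, h6, h7⟩ := h
  have hrad := rho_rad_pos h0
  have hm : Real.sqrt (1 + (4 * z t / (x t^2 + y t^2))^2) * rho (x t) (y t) (z t)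
      = ((x t^2 + y t^2)^2 + 16 * z t^2) / (x t^2 + y t^2) := by
    rw [← rho_sq, rho_eq_mul hR]
    field_simp
  rw [hm]
  unfold sCoord Jmom pTheta
  refine ((((((h1.pow 2).add (h2.pow 2)).pow 2).add
    ((h3.pow 2).const_mul 16)).log hrad.ne').const_mul (1/4)).congr_deriv ?_
  simp only [Pi.add_apply, Pi.pow_apply]
  field_simp
  ring

/-- Quotient rule for `N / √√(1 + w²)`. -/
lemma hasDerivAt_div_sqrt_sqrt {N w : ℝ → ℝ} {N' w' t : ℝ} (hN : HasDerivAt N N' t)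
    (hw : HasDerivAt w w' t) :
    HasDerivAt (fun t => N t / Real.sqrt (Real.sqrt (1 + w t^2)))
      ((N' - N t * w t * w' / (2 * (1 + w t^2))) / Real.sqrt (Real.sqrt (1 + w t^2))) t := by
  have h0 : 0 < 1 + w t^2 := by positivity
  have hm0 : 0 < Real.sqrt (1 + w t^2) := Real.sqrt_pos.2 h0
  have hn0 : 0 < Real.sqrt (Real.sqrt (1 + w t^2)) := Real.sqrt_pos.2 hm0
  have hm2 : Real.sqrt (1 + w t^2) ^ 2 = 1 + w t^2 := Real.sq_sqrt h0.le
  have hn2 : Real.sqrt (Real.sqrt (1 + w t^2)) ^ 2 = Real.sqrt (1 + w t^2) :=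
    Real.sq_sqrt hm0.le
  have h1 : HasDerivAt (fun t => 1 + w t^2) (2 * w t * w') t :=
    ((hw.pow 2).const_add 1).congr_deriv (by simp)
  refine (hN.div ((h1.sqrt h0.ne').sqrt hm0.ne') hn0.ne').congr_deriv ?_
  rw [← hm2]
  rw [Real.sqrt_sq hm0.le]
  set m := Real.sqrt (1 + w t^2)
  set n := Real.sqrt m
  rw [← hn2]
  field_simp

lemma transv_hasDerivAt {x y z px py pz : ℝ → ℝ} {t : ℝ} (h : HamODE x y z px py pz t)
    (hR : 0 < x t^2 + y t^2) (h0 : (x t, y t, z t) ≠ (0, 0, 0))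
    (hH : KH (x t) (y t) (z t) (px t) (py t) (pz t) = 0) {J p v : ℝ}
    (hJ : J = Jmom (x t) (y t) (z t) (px t) (py t) (pz t))
    (hp : p = pTheta (x t) (y t) (px t) (py t)) (hv : v = 4 * z t / (x t^2 + y t^2)) :
    HasDerivAt (fun t => transv (x t) (y t) (z t) (px t) (py t) (pz t))
      (-((J + p * v) * (p * (2 + v^2) - J * v)
        / (Real.sqrt (1 + v^2) * Real.sqrt (Real.sqrt (1 + v^2)) * rho (x t) (y t) (z t)))) t := by
  have hE := radial_angular hR h0 hH
  have hE' := energy_zero h0 hH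
  obtain ⟨h1, h2, h3, h5, h6, h7⟩ := h
  have hpi := Real.pi_pos
  have hρ := rho_pos h0
  have hr := rho_sq (x t) (y t) (z t)
  have hρm := rho_eq_mul (z := z t) hR
  have hRd : HasDerivAt (fun t => x t^2 + y t^2) (2 * (x t * px t + y t * py t)) t :=
    ((h1.pow 2).add (h2.pow 2)).congr_deriv (by simp; ring)
  have ha : HasDerivAt (fun t => x t * px t + y t * py t)
      (-((x t * py t - y t * px t + 1/2 * (x t^2 + y t^2) * pz t) * pz t)
        + 4 * z t^2 / (π * rho (x t) (y t) (z t)^3)) t := by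
    refine ((h1.mul h5).add (h2.mul h6)).congr_deriv ?_
    set ρ := rho (x t) (y t) (z t)
    trans ((px t - 1/2 * y t * pz t)^2 + (py t + 1/2 * x t * pz t)^2)
      - (x t * py t - y t * px t + 1/2 * (x t^2 + y t^2) * pz t) * pz t
      - (x t^2 + y t^2)^2 / (4 * π * ρ^3)
    · field_simp
      ring
    · rw [hE', show (x t^2 + y t^2)^2 = ρ^2 - 16 * z t^2 by rw [hr]; ring]
      field_simp
      ring
  have hb : HasDerivAt (fun t => x t * py t - y t * px t + 1/2 * (x t^2 + y t^2) * pz t)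
      ((x t * px t + y t * py t) * pz t
        - z t * (x t^2 + y t^2) / (π * rho (x t) (y t) (z t)^3)) t := by
    refine (((h1.mul h6).sub (h2.mul h5)).add ((hRd.const_mul (1/2)).mul h7)).congr_deriv ?_
    field_simp
    ring
  have hvd : HasDerivAt (fun t => 4 * z t / (x t^2 + y t^2))
      (2 * ((x t * py t - y t * px t + 1/2 * (x t^2 + y t^2) * pz t)
        - v * (x t * px t + y t * py t)) / (x t^2 + y t^2)) t := by
    refine ((h3.const_mul 4).div hRd hR.ne').congr_deriv ?_
    rw [hv]
    field_simp
    ring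
  have hm0 : 0 < 1 + v^2 := by positivity
  have hY := hasDerivAt_div_sqrt_sqrt (hb.sub (hvd.mul ha)) hvd
  refine hY.congr_deriv ?_
  have hG : J + p * v = (x t * px t + y t * py t)
      + (x t * py t - y t * px t + 1/2 * (x t^2 + y t^2) * pz t) * v := by
    rw [hJ, hp, hv]
    unfold Jmom pTheta
    field_simp
    ring
  have hG' : p * (2 + v^2) - J * v = 2 * (x t * py t - y t * px t + 1/2 * (x t^2 + y t^2) * pz t)
      + (x t * py t - y t * px t + 1/2 * (x t^2 + y t^2) * pz t) * v^2
      - (x t * px t + y t * py t) * v - (1 + v^2) * (x t^2 + y t^2) * pz t := by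
    rw [hJ, hp, hv]
    unfold Jmom pTheta
    field_simp
    ring
  have hz : z t = v * (x t^2 + y t^2) / 4 := by
    rw [hv]
    field_simp
  simp only [Pi.sub_apply, Pi.mul_apply]
  rw [hG, hG', ← hv, hρm, ← hv, hz]
  rw [← hv] at hE
  clear hY hvd hb ha hRd hG hG' h1 h2 h3 h5 h6 h7 hr hρm hE' hH
  have hm2 : Real.sqrt (1 + v^2) ^ 2 = 1 + v^2 := Real.sq_sqrt (by positivity)
  have hm1 : 0 < Real.sqrt (1 + v^2) := by positivity
  have hn2 : Real.sqrt (Real.sqrt (1 + v^2)) ^ 2 = Real.sqrt (1 + v^2) :=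
    Real.sq_sqrt hm1.le
  set m := Real.sqrt (1 + v^2)
  set n := Real.sqrt m
  set a := x t * px t + y t * py t
  set b := x t * py t - y t * px t + 1/2 * (x t^2 + y t^2) * pz t
  set R := x t^2 + y t^2
  have hK : 1 / π = 4 * m * (a^2 + b^2) := by
    rw [hE]
    field_simp
  have e1 : 4 * (v * R / 4)^2 / (π * (R * m)^3) = v^2 * (a^2 + b^2) / (R * m^2) := by
    trans (1 / π) * (v^2 / (4 * R * m^3))
    · field_simp
    · rw [hK]
      field_simp
  have e2 : v * R / 4 * R / (π * (R * m)^3) = v * (a^2 + b^2) / (R * m^2) := by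
    trans (1 / π) * (v / (4 * R * m^3))
    · field_simp
    · rw [hK]
      field_simp
  rw [e1, e2, ← hm2]
  have hR' : 0 < R := hR
  have hn1 : 0 < n := Real.sqrt_pos.2 hm1
  field_simp
  rw [hm2]
  ring

/-! ### Consecutive zeros of `z` -/

lemma deriv_sign_of_pos {f : ℝ → ℝ} {a b A B : ℝ} (hab : a < b) (hA : HasDerivAt f A a)
    (hB : HasDerivAt f B b) (ha : f a = 0) (hb : f b = 0) (h : ∀ t ∈ Ioo a b, 0 < f t) :
    0 ≤ A ∧ B ≤ 0 := by
  constructor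
  · have h1 := (hasDerivWithinAt_iff_tendsto_slope' (self_notMem_Ioi (a := a))).1
      hA.hasDerivWithinAt
    refine ge_of_tendsto h1 ?_
    filter_upwards [Ioo_mem_nhdsGT hab] with t ht
    rw [slope_def_field, ha, sub_zero]
    exact div_nonneg (h t ht).le (sub_nonneg.2 ht.1.le)
  · have h1 := (hasDerivWithinAt_iff_tendsto_slope' (self_notMem_Iio (a := b))).1
      hB.hasDerivWithinAt
    refine le_of_tendsto h1 ?_
    filter_upwards [Ioo_mem_nhdsLT hab] with t ht
    rw [slope_def_field, hb, sub_zero]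
    exact div_nonpos_of_nonneg_of_nonpos (h t ht).le (sub_nonpos.2 ht.2.le)

/-- At consecutive zeros the derivative does not have the same strict sign. -/
lemma deriv_mul_nonpos {f : ℝ → ℝ} {a b A B : ℝ} (hab : a < b) (hA : HasDerivAt f A a)
    (hB : HasDerivAt f B b) (hf : ContinuousOn f (Icc a b)) (ha : f a = 0) (hb : f b = 0)
    (h : ∀ t, a < t ∧ t < b → f t ≠ 0) : A * B ≤ 0 := by
  have hcases : (∀ t ∈ Ioo a b, 0 < f t) ∨ (∀ t ∈ Ioo a b, f t < 0) := by
    by_contra! hc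
    obtain ⟨⟨r, hr, hr'⟩, ⟨q, hq, hq'⟩⟩ := hc
    obtain ⟨t, ht, ht0⟩ := isPreconnected_Ioo.intermediate_value hr hq
      (hf.mono Ioo_subset_Icc_self) ⟨hr', hq'⟩
    exact h t ht ht0
  rcases hcases with hc | hc
  · obtain ⟨h1, h2⟩ := deriv_sign_of_pos hab hA hB ha hb hc
    exact mul_nonpos_of_nonneg_of_nonpos h1 h2
  · obtain ⟨h1, h2⟩ := deriv_sign_of_pos hab hA.neg hB.neg (by simp [ha]) (by simp [hb])
      (fun t ht => neg_pos.2 (hc t ht))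
    nlinarith

lemma energy_at_zero {x y z px py pz : ℝ} (hR : 0 < x^2 + y^2)
    (hH : KH x y z px py pz = 0) (hz : z = 0) :
    transv x y z px py pz ^ 2 + Jmom x y z px py pz ^ 2 = 1 / (4 * π) := by
  have h0 : (x, y, z) ≠ (0, 0, 0) := by
    intro h
    simp only [Prod.mk.injEq] at h
    rw [h.1, h.2.1] at hR
    norm_num at hR
  have h := transv_energy hR h0 hH
  rw [hz] at h ⊢
  simpa using h

lemma transv_at_zero {x y z px py pz : ℝ} (hz : z = 0) :
    transv x y z px py pz = pTheta x y px py + 1/2 * (x^2 + y^2) * pz := by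
  rw [hz]
  simp [transv, pTheta]

lemma constant_of_hasDerivAt_zero {f : ℝ → ℝ} {a b : ℝ}
    (h : ∀ t ∈ Icc a b, HasDerivAt f 0 t) : ∀ t ∈ Icc a b, f t = f a :=
  constant_of_has_deriv_right_zero (fun t ht => (h t ht).continuousAt.continuousWithinAt)
    (fun t ht => (h t ⟨ht.1, ht.2.le⟩).hasDerivWithinAt)

/-- Over a full period of the reduced motion (two consecutive half-oscillations of `z`) the
conserved quantities and the transverse velocity return to their values, while `s` moves in the
direction given by the sign of `J`. -/
lemma period_return {x y z px py pz : ℝ → ℝ} {t₀ t₁ t₂ : ℝ} (ht01 : t₀ < t₁) (ht12 : t₁ < t₂)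
    (hode : ∀ t ∈ Icc t₀ t₂, (x t, y t, z t) ≠ (0, 0, 0) ∧ HamODE x y z px py pz t)
    (hH : ∀ t ∈ Icc t₀ t₂, KH (x t) (y t) (z t) (px t) (py t) (pz t) = 0)
    (hR : ∀ t ∈ Icc t₀ t₂, 0 < x t^2 + y t^2)
    (hz₀ : z t₀ = 0) (hz₁ : z t₁ = 0) (hz₂ : z t₂ = 0)
    (hconsec : ∀ t, ((t₀ < t ∧ t < t₁) ∨ (t₁ < t ∧ t < t₂)) → z t ≠ 0)
    {J : ℝ} (hJ : J = Jmom (x t₀) (y t₀) (z t₀) (px t₀) (py t₀) (pz t₀)) :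
    Jmom (x t₂) (y t₂) (z t₂) (px t₂) (py t₂) (pz t₂) = J ∧
    pTheta (x t₂) (y t₂) (px t₂) (py t₂) = pTheta (x t₀) (y t₀) (px t₀) (py t₀) ∧
    (x t₂^2 + y t₂^2) * pz t₂ = (x t₀^2 + y t₀^2) * pz t₀ ∧
    (0 < J → sCoord (x t₀) (y t₀) (z t₀) < sCoord (x t₂) (y t₂) (z t₂)) ∧
    (J < 0 → sCoord (x t₂) (y t₂) (z t₂) < sCoord (x t₀) (y t₀) (z t₀)) ∧
    (J = 0 → sCoord (x t₂) (y t₂) (z t₂) = sCoord (x t₀) (y t₀) (z t₀)) := by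
  have m0 : t₀ ∈ Icc t₀ t₂ := ⟨le_rfl, (ht01.trans ht12).le⟩
  have m1 : t₁ ∈ Icc t₀ t₂ := ⟨ht01.le, ht12.le⟩
  have m2 : t₂ ∈ Icc t₀ t₂ := ⟨(ht01.trans ht12).le, le_rfl⟩
  have hJc := constant_of_hasDerivAt_zero
    (fun t ht => jmom_hasDerivAt (hode t ht).2 (hode t ht).1 (hH t ht))
  have hpc := constant_of_hasDerivAt_zero
    (fun t ht => pTheta_hasDerivAt (hode t ht).2 (hode t ht).1)
  simp only [← hJ] at hJc
  set p := pTheta (x t₀) (y t₀) (px t₀) (py t₀) with hp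
  set Y : ℝ → ℝ := fun t => transv (x t) (y t) (z t) (px t) (py t) (pz t) with hYdef
  have hzd : ∀ t ∈ Icc t₀ t₂, z t = 0 → HasDerivAt z (1/2 * Y t) t := by
    intro t ht hz
    refine (hode t ht).2.2.2.1.congr_deriv ?_
    simp only [hYdef]
    rw [transv_at_zero hz]
    unfold pTheta
    ring
  have hzc : ContinuousOn z (Icc t₀ t₂) :=
    fun t ht => (hode t ht).2.2.2.1.continuousAt.continuousWithinAt
  have hE : ∀ t ∈ Icc t₀ t₂, z t = 0 → Y t ^ 2 + J ^ 2 = 1 / (4 * π) := by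
    intro t ht hz
    have := energy_at_zero (hR t ht) (hH t ht) hz
    rwa [hJc t ht] at this
  have hY02 : Y t₀ = Y t₂ := by
    have h01 := deriv_mul_nonpos ht01 (hzd t₀ m0 hz₀) (hzd t₁ m1 hz₁)
      (hzc.mono (Icc_subset_Icc le_rfl ht12.le)) hz₀ hz₁ (fun t ht => hconsec t (Or.inl ht))
    have h12 := deriv_mul_nonpos ht12 (hzd t₁ m1 hz₁) (hzd t₂ m2 hz₂)
      (hzc.mono (Icc_subset_Icc ht01.le le_rfl)) hz₁ hz₂ (fun t ht => hconsec t (Or.inr ht))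
    have e0 := hE t₀ m0 hz₀
    have e1 := hE t₁ m1 hz₁
    have e2 := hE t₂ m2 hz₂
    have q02 : Y t₀ ^ 2 = Y t₂ ^ 2 := by linarith
    have q01 : Y t₀ ^ 2 = Y t₁ ^ 2 := by linarith
    rcases sq_eq_sq_iff_eq_or_eq_neg.1 q02 with h | h
    · exact h
    · rcases sq_eq_sq_iff_eq_or_eq_neg.1 q01 with h' | h'
      · have : Y t₁ ^ 2 ≤ 0 := by rw [h'] at h01; linarith
        have : Y t₀ = 0 := by nlinarith
        linarith
      · have : Y t₁ ^ 2 ≤ 0 := by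
          rw [show Y t₂ = Y t₁ by linarith] at h12
          linarith
        have : Y t₀ = 0 := by nlinarith
        linarith
  have hρ : ∀ t ∈ Icc t₀ t₂, 0 < rho (x t) (y t) (z t) := fun t ht => rho_pos (hode t ht).1
  have hYd : ∀ t ∈ Icc t₀ t₂, _ := fun t ht =>
    transv_hasDerivAt (hode t ht).2 (hR t ht) (hode t ht).1 (hH t ht) (hJc t ht).symm
      (hpc t ht).symm rfl
  have hsd : ∀ t ∈ Icc t₀ t₂, _ := fun t ht =>
    sCoord_hasDerivAt (hode t ht).2 (hR t ht) (hode t ht).1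
  have hEn : ∀ t ∈ Icc t₀ t₂, _ := fun t ht =>
    transv_energy (hR t ht) (hode t ht).1 (hH t ht)
  have h02 : t₀ < t₂ := ht01.trans ht12
  have up : 0 ≤ J → _ := fun hJ0 => drift (J := J) (p := p) (M := 1 / (4 * π))
    (v := fun t => 4 * z t / (x t^2 + y t^2)) (Y := Y)
    (s := fun t => sCoord (x t) (y t) (z t)) (ρ := fun t => rho (x t) (y t) (z t)) h02 hJ0 hρ hYd
    (fun t ht => by
      have := hsd t ht
      rwa [hJc t ht, hpc t ht] at this)
    (fun t ht => by
      have := hEn t ht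
      rwa [hJc t ht, hpc t ht] at this) hY02 (by simp [hz₀])
  -- the equations for `(Y, s)` are invariant under `(J, p, s) ↦ (-J, -p, -s)`
  have down : J ≤ 0 → _ := fun hJ0 => drift (J := -J) (p := -p) (M := 1 / (4 * π))
    (v := fun t => 4 * z t / (x t^2 + y t^2)) (Y := Y)
    (s := fun t => -sCoord (x t) (y t) (z t)) (ρ := fun t => rho (x t) (y t) (z t)) h02
    (neg_nonneg.2 hJ0) hρ
    (fun t ht => (hYd t ht).congr_deriv (by ring))
    (fun t ht => by
      have := hsd t ht
      rw [hJc t ht, hpc t ht] at this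
      exact this.neg.congr_deriv (by ring))
    (fun t ht => by
      have := hEn t ht
      rw [hJc t ht, hpc t ht] at this
      rw [← this]
      ring) hY02 (by simp [hz₀])
  refine ⟨hJc t₂ m2, hpc t₂ m2, ?_, fun h => (up h.le).2 h, fun h => ?_, fun h => ?_⟩
  · have h1 : transv _ _ _ _ _ _ = transv _ _ _ _ _ _ := hY02
    rw [transv_at_zero hz₀, transv_at_zero hz₂, hpc t₂ m2] at h1
    linarith
  · exact neg_lt_neg_iff.1 ((down h.le).2 (neg_pos.2 h))
  · exact le_antisymm (neg_le_neg_iff.1 (down h.le).1) (up h.ge).1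

/-! ### Self-similarity -/

/-- If the state at time `t` is the image of the state at time `s` under a rotation and dilation
(acting on the plane as multiplication by `α + iβ`, with `L = |α + iβ|²`), then the maximal
interval is stable under the corresponding affine change of time. -/
lemma affine_stable {I : Set ℝ} {x y z px py pz : ℝ → ℝ} {α β L s t : ℝ}
    (hsol : IsMaximalSolution I x y z px py pz) (hs : s ∈ I) (ht : t ∈ I)
    (hL : L = α^2 + β^2) (hL0 : 0 < L)
    (hx : x t = α * x s - β * y s) (hy : y t = β * x s + α * y s) (hz : z t = L * z s)
    (hpx : L * px t = α * px s - β * py s) (hpy : L * py t = β * px s + α * py s)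
    (hpz : L * pz t = pz s) :
    ∀ r ∈ I, t + L * (r - s) ∈ I ∧
      x (t + L * (r - s))^2 + y (t + L * (r - s))^2 = L * (x r^2 + y r^2) := by
  have h1 := symm_solution hL hL0 t s hsol.1
  have e : s + (t - t) / L = s := by simp
  obtain ⟨h2, h3⟩ := maximal_absorbs (τ := t) hsol h1 ht (by simpa [e] using hs) (by
    simp only [e]
    rw [← hx, ← hy, ← hz, ← hpx, ← hpy, ← hpz]
    field_simp)
  intro r hr
  have e' : s + (t + L * (r - s) - t) / L = r := by
    field_simp
    ring
  have hm : t + L * (r - s) ∈ {t' | s + (t' - t) / L ∈ I} := by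
    rw [mem_ofPred_eq, e']
    exact hr
  refine ⟨h2 hm, ?_⟩
  obtain ⟨h4, h5, -⟩ := h3 _ hm
  rw [← h4, ← h5]
  simp only [e']
  rw [hL]
  ring

/-- A point of the plane other than the origin is carried to any other point by multiplication
by a complex number `α + iβ`. -/
lemma exists_planar {x₀ y₀ x₂ y₂ : ℝ} (hR₀ : 0 < x₀^2 + y₀^2) :
    ∃ α β : ℝ, x₂ = α * x₀ - β * y₀ ∧ y₂ = β * x₀ + α * y₀ := by
  refine ⟨(x₀ * x₂ + y₀ * y₂) / (x₀^2 + y₀^2), (x₀ * y₂ - y₀ * x₂) / (x₀^2 + y₀^2), ?_, ?_⟩ <;>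
  · field_simp
    ring

/-- Two states with `z = 0` sharing `J`, `p_θ` and `(x² + y²) p_z` differ by a rotation and a
dilation; hence the maximal interval is stable under the associated affine map of time. -/
lemma affine_stable_of_invariants {I : Set ℝ} {x y z px py pz : ℝ → ℝ} {s t : ℝ}
    (hsol : IsMaximalSolution I x y z px py pz) (hs : s ∈ I) (ht : t ∈ I)
    (hRs : 0 < x s^2 + y s^2) (hRt : 0 < x t^2 + y t^2) (hzs : z s = 0) (hzt : z t = 0)
    (hJ : x t * px t + y t * py t = x s * px s + y s * py s)
    (hp : pTheta (x t) (y t) (px t) (py t) = pTheta (x s) (y s) (px s) (py s))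
    (hb : (x t^2 + y t^2) * pz t = (x s^2 + y s^2) * pz s)
    {L : ℝ} (hL : x t^2 + y t^2 = L * (x s^2 + y s^2)) :
    ∀ r ∈ I, t + L * (r - s) ∈ I ∧
      x (t + L * (r - s))^2 + y (t + L * (r - s))^2 = L * (x r^2 + y r^2) := by
  obtain ⟨α, β, hx, hy⟩ := exists_planar (x₂ := x t) (y₂ := y t) hRs
  have hL0 : 0 < L := pos_of_mul_pos_left (hL ▸ hRt) hRs.le
  have hLe : L = α^2 + β^2 := by
    refine mul_right_cancel₀ hRs.ne' ?_
    rw [← hL, hx, hy]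
    ring
  unfold pTheta at hp
  refine affine_stable hsol hs ht hLe hL0 hx hy (by rw [hzs, hzt, mul_zero]) ?_ ?_ ?_
  · refine mul_right_cancel₀ hRs.ne' ?_
    linear_combination (-px t) * hL + x t * hJ - y t * hp + (x s * px s + y s * py s) * hx
      - (x s * py s - y s * px s) * hy
  · refine mul_right_cancel₀ hRs.ne' ?_
    linear_combination (-py t) * hL + y t * hJ + x t * hp + (x s * px s + y s * py s) * hy
      + (x s * py s - y s * px s) * hx
  · refine mul_right_cancel₀ hRs.ne' ?_
    linear_combination (-pz t) * hL + hb

/-! ### Intervals stable under an affine map of time -/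

/-- The case of a contraction `A` whose fixed point lies beyond `t` and outside `I`: the fixed
point bounds `I` above, and `hB` says that `I` is stable under `A⁻¹`. -/
lemma interval_of_contraction {I : Set ℝ} (hI : I.OrdConnected) {s t L : ℝ} (hst : s < t)
    (ht : t ∈ I) (hL0 : 0 < L) (hL1 : L < 1)
    (hfix : ∀ r, t + L * (r - s) = r → r ∉ I) (hB : ∀ r ∈ I, s + L⁻¹ * (r - t) ∈ I) :
    BddAbove I ∧ ¬ BddBelow I := by
  obtain ⟨q, hq⟩ : ∃ q, t + L * (q - s) = q := ⟨(t - L * s) / (1 - L), by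
    have : 1 - L ≠ 0 := by linarith
    field_simp
    ring⟩
  have htq : t < q := by nlinarith
  have hqI := hfix q hq
  constructor
  · refine ⟨q, fun r hr => ?_⟩
    by_contra! hc
    exact hqI (hI.out ht hr ⟨htq.le, hc.le⟩)
  · intro hb
    -- the inverse map expands about `q`, so `q + L (m - q)` is a lower bound when `m` is
    have h1 : q + L * (sInf I - q) ≤ sInf I := by
      refine le_csInf ⟨t, ht⟩ fun r hr => ?_
      have h2 := mul_le_mul_of_nonneg_left (csInf_le hb (hB r hr)) hL0.le
      have h3 : L * (s + L⁻¹ * (r - t)) = L * s + (r - t) := by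
        field_simp
      linarith
    have h2 := csInf_le hb ht
    nlinarith

/-- The case of an expansion: its fixed point lies before `s` and bounds `I` below, and a finite
supremum would be improved by applying the map. -/
lemma interval_of_expansion {I : Set ℝ} (hI : I.OrdConnected) {s t L : ℝ} (hst : s < t)
    (hs : s ∈ I) (hL1 : 1 < L)
    (hfix : ∀ r, t + L * (r - s) = r → r ∉ I) (hA : ∀ r ∈ I, t + L * (r - s) ∈ I) :
    BddBelow I ∧ ¬ BddAbove I := by
  obtain ⟨q, hq⟩ : ∃ q, t + L * (q - s) = q := ⟨(t - L * s) / (1 - L), by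
    have : 1 - L ≠ 0 := by linarith
    field_simp
    ring⟩
  have htq : q < s := by nlinarith
  have hqI := hfix q hq
  constructor
  · refine ⟨q, fun r hr => ?_⟩
    by_contra! hc
    exact hqI (hI.out hr hs ⟨hc.le, htq.le⟩)
  · intro hb
    have h1 : sSup I ≤ q + (sSup I - q) / L := by
      refine csSup_le ⟨s, hs⟩ fun r hr => ?_
      have h2 := le_csSup hb (hA r hr)
      have h3 : r - q ≤ (sSup I - q) / L := by
        rw [le_div_iff₀ (by linarith)]
        linarith
      linarith
    have h2 := le_csSup hb hs
    have h3 : (sSup I - q) / L < sSup I - q := div_lt_self (by linarith) hL1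
    linarith

lemma interval_of_translation {I : Set ℝ} (hI : I.OrdConnected) {s T : ℝ} (hT : 0 < T)
    (hs : s ∈ I) (hA : ∀ r ∈ I, r + T ∈ I) (hB : ∀ r ∈ I, r - T ∈ I) : I = univ := by
  have h1 : ∀ n : ℕ, s + n * T ∈ I ∧ s - n * T ∈ I := by
    intro n
    induction n with
    | zero => simpa using hs
    | succ k ih =>
      refine ⟨?_, ?_⟩
      · convert hA _ ih.1 using 1
        push_cast
        ring
      · convert hB _ ih.2 using 1
        push_cast
        ring
  refine eq_univ_of_forall fun r => ?_
  obtain ⟨n, hn⟩ := exists_nat_ge (|r - s| / T)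
  rw [div_le_iff₀ hT] at hn
  obtain ⟨h2, h3⟩ := abs_le.1 hn
  exact hI.out (h1 n).2 (h1 n).1 ⟨by linarith, by linarith⟩

lemma exp_sCoord_sq {x y z : ℝ} (hR : 0 < x^2 + y^2) (hz : z = 0) :
    Real.exp (sCoord x y z) ^ 2 = x^2 + y^2 := by
  rw [hz]
  unfold sCoord
  rw [show (x^2 + y^2)^2 + 16 * (0:ℝ)^2 = (x^2 + y^2)^2 by ring, Real.log_pow,
    ← Real.exp_nat_mul]
  rw [show ((2:ℕ):ℝ) * (1/4 * (((2:ℕ):ℝ) * Real.log (x^2 + y^2))) = Real.log (x^2 + y^2) by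
    push_cast; ring, Real.exp_log hR]

/-! ### The stratification -/

/-- **Corollary (stratification of A-orbits).** With `J` the (constant) dilational momentum
and `λ = exp(s(t₂) − s(t₀))`: `J < 0` iff `λ < 1`, in which case the maximal interval is
bounded above and unbounded below (future collision, unbounded past); `J > 0` iff `λ > 1`,
in which case it is bounded below and unbounded above (past collision, unbounded future);
`J = 0` iff `λ = 1`, in which case `I = ℝ`. -/
theorem kepler_heisenberg_stratification
    (I : Set ℝ) (x y z px py pz : ℝ → ℝ) (t₀ t₁ t₂ : ℝ)
    (hsol : IsMaximalSolution I x y z px py pz)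
    (hH : ∀ t ∈ I, KH (x t) (y t) (z t) (px t) (py t) (pz t) = 0)
    (hxy : ∀ t ∈ I, (x t, y t) ≠ (0, 0))
    (ht01 : t₀ < t₁) (ht12 : t₁ < t₂)
    (ht₀I : t₀ ∈ I) (ht₁I : t₁ ∈ I) (ht₂I : t₂ ∈ I)
    (hz₀ : z t₀ = 0) (hz₁ : z t₁ = 0) (hz₂ : z t₂ = 0)
    (hconsec : ∀ t, ((t₀ < t ∧ t < t₁) ∨ (t₁ < t ∧ t < t₂)) → z t ≠ 0)
    (J lam : ℝ)
    (hJ : J = Jmom (x t₀) (y t₀) (z t₀) (px t₀) (py t₀) (pz t₀))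
    (hlam : lam = Real.exp (sCoord (x t₂) (y t₂) (z t₂) - sCoord (x t₀) (y t₀) (z t₀))) :
    ((J < 0 ↔ lam < 1) ∧ (J < 0 → BddAbove I ∧ ¬ BddBelow I)) ∧
    ((J > 0 ↔ lam > 1) ∧ (J > 0 → BddBelow I ∧ ¬ BddAbove I)) ∧
    ((J = 0 ↔ lam = 1) ∧ (J = 0 → I = Set.univ)) := by
  obtain ⟨hopen, hI, -, hode⟩ := isSolutionOn_iff.1 hsol.1
  have h02 : t₀ < t₂ := ht01.trans ht12
  have hsub : Icc t₀ t₂ ⊆ I := hI.out ht₀I ht₂I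
  have hR : ∀ t ∈ I, 0 < x t^2 + y t^2 := by
    intro t ht
    have h := hxy t ht
    rw [Ne, Prod.mk.injEq, not_and_or] at h
    rcases h with h | h <;> positivity
  obtain ⟨hJ2, hp2, hb2, hup, hdown, hzero⟩ := period_return ht01 ht12
    (fun t ht => hode t (hsub ht)) (fun t ht => hH t (hsub ht)) (fun t ht => hR t (hsub ht))
    hz₀ hz₁ hz₂ hconsec hJ
  set s₀ := sCoord (x t₀) (y t₀) (z t₀) with hs₀
  set s₂ := sCoord (x t₂) (y t₂) (z t₂) with hs₂
  have hlam0 : 0 < lam := hlam ▸ Real.exp_pos _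
  have lup : 0 < J → 1 < lam := fun h => by
    rw [hlam, Real.one_lt_exp_iff]
    linarith [hup h]
  have ldown : J < 0 → lam < 1 := fun h => by
    rw [hlam, Real.exp_lt_one_iff]
    linarith [hdown h]
  have lzero : J = 0 → lam = 1 := fun h => by
    rw [hlam, hzero h, sub_self, Real.exp_zero]
  have hJ' : x t₂ * px t₂ + y t₂ * py t₂ = x t₀ * px t₀ + y t₀ * py t₀ := by
    rw [hJ] at hJ2
    simpa [Jmom, hz₀, hz₂] using hJ2
  have hL : x t₂^2 + y t₂^2 = lam^2 * (x t₀^2 + y t₀^2) := by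
    rw [← exp_sCoord_sq (hR t₀ ht₀I) hz₀, ← exp_sCoord_sq (hR t₂ ht₂I) hz₂, hlam, ← mul_pow,
      ← Real.exp_add, ← hs₀, ← hs₂, sub_add_cancel]
  have hL' : x t₀^2 + y t₀^2 = (lam^2)⁻¹ * (x t₂^2 + y t₂^2) := by
    rw [hL]
    field_simp
  have hA := affine_stable_of_invariants hsol ht₀I ht₂I (hR t₀ ht₀I) (hR t₂ ht₂I) hz₀ hz₂
    hJ' hp2 hb2 hL
  have hB := affine_stable_of_invariants hsol ht₂I ht₀I (hR t₂ ht₂I) (hR t₀ ht₀I) hz₂ hz₀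
    hJ'.symm hp2.symm hb2.symm hL'
  -- at a fixed time in `I` the positive quantity `x² + y²` would equal `λ²` times itself
  have hfix : lam ≠ 1 → ∀ r, t₂ + lam^2 * (r - t₀) = r → r ∉ I := by
    intro hne r hr hrI
    have h1 := (hA r hrI).2
    rw [hr] at h1
    have h2 : lam^2 = 1 := by
      refine mul_right_cancel₀ (hR r hrI).ne' ?_
      linarith
    exact hne ((pow_eq_one_iff_of_nonneg hlam0.le two_ne_zero).1 h2)
  refine ⟨⟨⟨ldown, fun h => ?_⟩, fun h => ?_⟩, ⟨⟨lup, fun h => ?_⟩, fun h => ?_⟩,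
    ⟨lzero, fun h => ?_⟩, fun h => ?_⟩
  · by_contra! hc
    rcases hc.eq_or_lt with hc | hc
    · linarith [lzero hc.symm]
    · linarith [lup hc]
  · have hl := ldown h
    exact interval_of_contraction hI h02 ht₂I (by positivity)
      (pow_lt_one₀ hlam0.le hl two_ne_zero) (hfix hl.ne) (fun r hr => (hB r hr).1)
  · by_contra! hc
    rcases hc.eq_or_lt with hc | hc
    · linarith [lzero hc]
    · linarith [ldown hc]
  · have hl := lup h
    exact interval_of_expansion hI h02 ht₀I (one_lt_pow₀ hl two_ne_zero) (hfix hl.ne')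
      (fun r hr => (hA r hr).1)
  · rcases lt_trichotomy J 0 with hc | hc | hc
    · linarith [ldown hc]
    · exact hc
    · linarith [lup hc]
  · have hl := lzero h
    rw [hl] at hA hB
    refine interval_of_translation hI (sub_pos.2 h02) ht₀I (fun r hr => ?_) (fun r hr => ?_)
    · convert (hA r hr).1 using 1
      ring
    · convert (hB r hr).1 using 1
      ring
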